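/- arXiv:1901.10790 — 2 statements merged into one kernel-verified Lean document; each statement's English description precedes it below -/
import Mathlib

section
/- Let 0 < λ < 1 and let ρ be a zero of L(λ,λ,·) with Re ρ = 1/2. Then L(1−λ,1−λ,ρ) = 0. -/
/-- The Dirichlet series of the Lerch zeta-function, convergent for `1 < re s`. -/
noncomputable def lerchSeries (lam alp : ℝ) (s : ℂ) : ℂ :=
  ∑' m : ℕ, Complex.exp (2 * Real.pi * Complex.I * lam * m) / ((m : ℂ) + alp) ^ s

/-- `F` is the analytic continuation of the Lerch zeta-function with parameters `lam`, `alp`: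
it is complex differentiable away from `1` and agrees with the Dirichlet series on `1 < re s`. -/
def IsLerch (lam alp : ℝ) (F : ℂ → ℂ) : Prop :=
  (∀ s : ℂ, s ≠ 1 → DifferentiableAt ℂ F s) ∧
  ∀ s : ℂ, 1 < s.re → F s = lerchSeries lam alp s

open scoped Classical

/-- The multiplicity (order of vanishing) of `F` at `z` (junk value `0` if `F` is not
analytic at `z` or vanishes to infinite order). -/
noncomputable def zeroOrder (F : ℂ → ℂ) (z : ℂ) : ℕ :=
  if h : AnalyticAt ℂ F z then (analyticOrderAt F z).toNat else 0

open Complex Real Set Filter Topology Asymptotics MeasureTheory ComplexConjugate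

/-- Even theta function attached to `L(lam, lam, s)`. -/
noncomputable def thE (lam t : ℝ) : ℂ :=
  cexp (-π * lam ^ 2 * t) * jacobiTheta₂ (lam + I * lam * t) (I * t)

/-- Odd theta function attached to `L(lam, lam, s)`. -/
noncomputable def thO (lam t : ℝ) : ℂ :=
  cexp (-π * lam ^ 2 * t) * (jacobiTheta₂' (lam + I * lam * t) (I * t) / (2 * π * I)
    + lam * jacobiTheta₂ (lam + I * lam * t) (I * t))

/-- The additive character. -/
noncomputable def thA (lam : ℝ) (n : ℤ) : ℂ := cexp (2 * π * I * lam * n)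

lemma norm_thA (lam : ℝ) (n : ℤ) : ‖thA lam n‖ = 1 := by
  rw [thA, show (2 * π * I * lam * n : ℂ) = ((2 * π * lam * n : ℝ) : ℂ) * I by push_cast; ring]
  exact Complex.norm_exp_ofReal_mul_I _

lemma thE_term (lam t : ℝ) (n : ℤ) :
    thA lam n * rexp (-π * (n + lam) ^ 2 * t) =
      cexp (-π * lam ^ 2 * t) * jacobiTheta₂_term n (lam + I * lam * t) (I * t) := by
  rw [thA, jacobiTheta₂_term, ofReal_exp, ← Complex.exp_add, ← Complex.exp_add]
  congr 1
  push_cast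
  linear_combination (-2 * π * lam * n * t - π * n ^ 2 * t : ℂ) * I_sq

lemma hasSum_thE (lam : ℝ) {t : ℝ} (ht : 0 < t) :
    HasSum (fun n : ℤ ↦ thA lam n * rexp (-π * (n + lam) ^ 2 * t)) (thE lam t) := by
  have h1 := hasSum_jacobiTheta₂_term (lam + I * lam * t) (τ := I * t)
    (by rwa [I_mul_im, ofReal_re])
  exact (h1.mul_left (cexp (-π * lam ^ 2 * t))).congr_fun fun n ↦ thE_term lam t n

lemma hasSum_thO (lam : ℝ) {t : ℝ} (ht : 0 < t) :
    HasSum (fun n : ℤ ↦ thA lam n * ((n + lam : ℝ) : ℂ) * rexp (-π * (n + lam) ^ 2 * t))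
      (thO lam t) := by
  have h0 : 0 < (I * t).im := by rwa [I_mul_im, ofReal_re]
  have h1 := hasSum_jacobiTheta₂_term (lam + I * lam * t) h0
  have h2 := hasSum_jacobiTheta₂'_term (lam + I * lam * t) h0
  refine (((h2.div_const (2 * π * I)).add (h1.mul_left ↑lam)).mul_left
    (cexp (-π * lam ^ 2 * t))).congr_fun (fun n ↦ ?_)
  rw [jacobiTheta₂'_term, mul_assoc (2 * π * I), mul_div_cancel_left₀ _ two_pi_I_ne_zero, ← add_mul,
    mul_right_comm, thE_term]
  push_cast
  ring

lemma th_pref {x : ℝ} (hx : 0 < x) :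
    1 / (-I * (I * ((1 / x : ℝ) : ℂ))) ^ (1 / 2 : ℂ) = ((x ^ (1 / 2 : ℝ) : ℝ) : ℂ) := by
  rw [show -I * (I * ((1 / x : ℝ) : ℂ)) = ((1 / x : ℝ) : ℂ) by
    linear_combination (-((1 / x : ℝ) : ℂ)) * I_sq]
  rw [show (1 / 2 : ℂ) = ((1 / 2 : ℝ) : ℂ) by push_cast; rfl,
    ← ofReal_cpow (by positivity), one_div x, Real.inv_rpow hx.le]
  simp

lemma th_exp (lam : ℝ) {x : ℝ} (hx : 0 < x) :
    cexp (-π * lam ^ 2 * ((1 / x : ℝ) : ℂ)) *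
      cexp (-π * I * (lam + I * lam * ((1 / x : ℝ) : ℂ)) ^ 2 / (I * ((1 / x : ℝ) : ℂ))) =
    cexp (-2 * π * I * lam ^ 2) * cexp (-π * lam ^ 2 * x) := by
  have hx' : (x : ℂ) ≠ 0 := ofReal_ne_zero.mpr hx.ne'
  rw [← Complex.exp_add, ← Complex.exp_add]
  congr 1
  push_cast
  field_simp
  linear_combination (-(lam : ℂ) ^ 2) * I_sq

lemma th_arg (lam : ℝ) {x : ℝ} (hx : 0 < x) :
    (lam + I * lam * ((1 / x : ℝ) : ℂ)) / (I * ((1 / x : ℝ) : ℂ)) = conj (lam + I * lam * x : ℂ) := by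
  have hx' : (x : ℂ) ≠ 0 := ofReal_ne_zero.mpr hx.ne'
  simp only [map_add, map_mul, conj_I, conj_ofReal]
  push_cast
  field_simp
  linear_combination ((lam : ℂ) * x) * I_sq

lemma th_arg2 {x : ℝ} (hx : 0 < x) :
    -1 / (I * ((1 / x : ℝ) : ℂ)) = -conj (I * x : ℂ) := by
  have hx' : (x : ℂ) ≠ 0 := ofReal_ne_zero.mpr hx.ne'
  simp only [map_mul, conj_I, conj_ofReal]
  push_cast
  field_simp
  linear_combination (-1 : ℂ) * I_sq

lemma th_conj_exp (lam x : ℝ) : conj (cexp (-π * lam ^ 2 * x)) = cexp (-π * lam ^ 2 * x) := by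
  rw [← Complex.exp_conj]; simp

lemma thE_feq (lam : ℝ) {x : ℝ} (hx : 0 < x) :
    thE lam (1 / x) = (cexp (-2 * π * I * lam ^ 2) * ((x ^ (1 / 2 : ℝ) : ℝ) : ℂ))
      * conj (thE lam x) := by
  have he := th_exp lam hx
  rw [thE, thE, jacobiTheta₂_functional_equation, th_pref hx, th_arg lam hx, th_arg2 hx,
    ← jacobiTheta₂_conj, map_mul, th_conj_exp]
  linear_combination (((x ^ (1 / 2 : ℝ) : ℝ) : ℂ) *
    conj (jacobiTheta₂ (lam + I * lam * x) (I * x))) * he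

lemma thO_feq (lam : ℝ) {x : ℝ} (hx : 0 < x) :
    thO lam (1 / x) = (I * cexp (-2 * π * I * lam ^ 2) * ((x ^ (3 / 2 : ℝ) : ℝ) : ℂ))
      * conj (thO lam x) := by
  have hx' : (x : ℂ) ≠ 0 := ofReal_ne_zero.mpr hx.ne'
  have he := th_exp lam hx
  have h32 : ((x ^ (3 / 2 : ℝ) : ℝ) : ℂ) = x * ((x ^ (1 / 2 : ℝ) : ℝ) : ℂ) := by
    rw [show (3 / 2 : ℝ) = 1 + 1 / 2 by norm_num, Real.rpow_add hx, Real.rpow_one]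
    push_cast; rfl
  rw [thO, thO,
    jacobiTheta₂_functional_equation (lam + I * lam * ((1 / x : ℝ) : ℂ)) (I * ((1 / x : ℝ) : ℂ)),
    jacobiTheta₂'_functional_equation (lam + I * lam * ((1 / x : ℝ) : ℂ)) (I * ((1 / x : ℝ) : ℂ)),
    th_pref hx, th_arg lam hx, th_arg2 hx,
    ← jacobiTheta₂_conj, ← jacobiTheta₂'_conj, map_mul, th_conj_exp, h32]
  simp only [map_add, map_mul, map_div₀, conj_ofReal, conj_I, map_ofNat]
  set U := conj (jacobiTheta₂ (lam + I * lam * x) (I * x))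
  set V := conj (jacobiTheta₂' (lam + I * lam * x) (I * x))
  set E1 := cexp (-π * lam ^ 2 * ((1 / x : ℝ) : ℂ))
  set E2 := cexp (-π * I * (lam + I * lam * ((1 / x : ℝ) : ℂ)) ^ 2 / (I * ((1 / x : ℝ) : ℂ)))
  set X := ((x ^ (1 / 2 : ℝ) : ℝ) : ℂ)
  have hpi : (π : ℂ) ≠ 0 := ofReal_ne_zero.mpr pi_ne_zero
  trans (E1 * E2) * (I * x * X * (V / (2 * π * -I) + lam * U))
  · push_cast
    field_simp
    ring_nf
    simp only [I_sq, show I ^ 3 = -I from I_pow_three]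
    ring
  · rw [he]; ring

lemma continuousOn_thE (lam : ℝ) : ContinuousOn (thE lam) (Ioi 0) := by
  intro x hx
  apply ContinuousAt.continuousWithinAt
  have h := continuousAt_jacobiTheta₂ (lam + I * lam * x) (τ := I * x)
    (by rw [I_mul_im, ofReal_re]; exact hx)
  have h2 : ContinuousAt (fun t : ℝ ↦ jacobiTheta₂ (lam + I * lam * t) (I * t)) x :=
    ContinuousAt.comp (f := fun t : ℝ ↦ ((lam + I * lam * t : ℂ), (I * t : ℂ))) h (by fun_prop)
  unfold thE
  exact ContinuousAt.mul (by fun_prop) h2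

lemma continuousOn_thO (lam : ℝ) : ContinuousOn (thO lam) (Ioi 0) := by
  intro x hx
  apply ContinuousAt.continuousWithinAt
  have h0 : 0 < (I * x).im := by rw [I_mul_im, ofReal_re]; exact hx
  have h := continuousAt_jacobiTheta₂ (lam + I * lam * x) h0
  have h' := continuousAt_jacobiTheta₂' (lam + I * lam * x) h0
  have h2 : ContinuousAt (fun t : ℝ ↦ jacobiTheta₂ (lam + I * lam * t) (I * t)) x :=
    ContinuousAt.comp (f := fun t : ℝ ↦ ((lam + I * lam * t : ℂ), (I * t : ℂ))) h (by fun_prop)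
  have h3 : ContinuousAt (fun t : ℝ ↦ jacobiTheta₂' (lam + I * lam * t) (I * t)) x :=
    ContinuousAt.comp (f := fun t : ℝ ↦ ((lam + I * lam * t : ℂ), (I * t : ℂ))) h' (by fun_prop)
  unfold thO
  exact ContinuousAt.mul (by fun_prop) ((h3.div_const _).add (h2.const_mul _))

lemma thE_top {lam : ℝ} (h0 : 0 < lam) (h1 : lam < 1) (r : ℝ) :
    thE lam =O[atTop] (fun x : ℝ ↦ x ^ r) := by
  obtain ⟨p, hp, hp'⟩ := HurwitzKernelBounds.isBigO_atTop_F_int_zero_sub (lam : UnitAddCircle)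
  have hne : (lam : UnitAddCircle) ≠ 0 := by
    rw [Ne, AddCircle.coe_eq_zero_iff_of_mem_Ico ⟨h0.le, h1⟩]; exact h0.ne'
  simp only [hne, if_false, sub_zero] at hp'
  refine IsBigO.trans ?_ (hp'.trans (isLittleO_exp_neg_mul_rpow_atTop hp r).isBigO)
  refine IsBigO.of_bound 1 ?_
  filter_upwards [eventually_gt_atTop 0] with t ht
  rw [one_mul]
  refine le_trans ?_ (le_abs_self _)
  rw [← (hasSum_thE lam ht).tsum_eq]
  refine tsum_of_norm_bounded (HurwitzKernelBounds.summable_f_int 0 lam ht).hasSum fun n ↦ ?_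
  rw [norm_mul, norm_thA, norm_real, Real.norm_of_nonneg (Real.exp_pos _).le,
    HurwitzKernelBounds.f_int, pow_zero]

lemma thO_top (lam : ℝ) (r : ℝ) :
    thO lam =O[atTop] (fun x : ℝ ↦ x ^ r) := by
  obtain ⟨p, hp, hp'⟩ := HurwitzKernelBounds.isBigO_atTop_F_int_one (lam : UnitAddCircle)
  refine IsBigO.trans ?_ (hp'.trans (isLittleO_exp_neg_mul_rpow_atTop hp r).isBigO)
  refine IsBigO.of_bound 1 ?_
  filter_upwards [eventually_gt_atTop 0] with t ht
  rw [one_mul]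
  refine le_trans ?_ (le_abs_self _)
  rw [← (hasSum_thO lam ht).tsum_eq]
  refine tsum_of_norm_bounded (HurwitzKernelBounds.summable_f_int 1 lam ht).hasSum fun n ↦ ?_
  rw [norm_mul, norm_mul, norm_thA, norm_real, norm_real, Real.norm_of_nonneg (Real.exp_pos _).le,
    HurwitzKernelBounds.f_int, pow_one, one_mul, Real.norm_eq_abs]

/-- A functional equation pair between a function and its conjugate. -/
noncomputable def conjPair (f : ℝ → ℂ) (k : ℝ) (ε : ℂ) (hk : 0 < k) (hε : ε ≠ 0)
    (hc : ContinuousOn f (Ioi 0)) (htop : ∀ r : ℝ, f =O[atTop] (fun x : ℝ ↦ x ^ r))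
    (hfe : ∀ x : ℝ, 0 < x → f (1 / x) = (ε * ((x ^ k : ℝ) : ℂ)) * conj (f x)) : WeakFEPair ℂ where
  f := f
  g := fun x ↦ conj (f x)
  k := k
  ε := ε
  f₀ := 0
  g₀ := 0
  hf_int := hc.locallyIntegrableOn measurableSet_Ioi
  hg_int := (continuous_conj.comp_continuousOn hc).locallyIntegrableOn measurableSet_Ioi
  hk := hk
  hε := hε
  h_feq x hx := hfe x hx
  hf_top r := by simpa using htop r
  hg_top r := by
    refine IsBigO.trans (IsBigO.of_bound 1 ?_) (htop r)
    filter_upwards with x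
    simp

lemma mellin_conj_aux (f : ℝ → ℂ) (s : ℂ) :
    mellin (fun x ↦ conj (f x)) (conj s) = conj (mellin f s) := by
  rw [mellin, mellin, ← integral_conj]
  refine setIntegral_congr_fun measurableSet_Ioi fun t ht ↦ ?_
  have ht' : (0 : ℝ) < t := ht
  simp only [smul_eq_mul, map_mul]
  congr 1
  have h1 := cpow_conj (t : ℂ) (s - 1) (by rw [arg_ofReal_of_nonneg ht'.le]; exact pi_pos.ne)
  simpa using h1

lemma Gammaℝ_conj_aux (s : ℂ) : Gammaℝ (conj s) = conj (Gammaℝ s) := by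
  have h1 := cpow_conj (π : ℂ) (-s / 2)
    (by rw [arg_ofReal_of_nonneg pi_pos.le]; exact pi_pos.ne)
  rw [Gammaℝ_def, Gammaℝ_def, map_mul, ← Complex.Gamma_conj]
  simp only [map_div₀, map_neg, map_ofNat, conj_ofReal] at h1 ⊢
  rw [h1]

lemma conjPair_props (f : ℝ → ℂ) (k : ℝ) (ε : ℂ) (hk : 0 < k) (hε : ε ≠ 0)
    (hc : ContinuousOn f (Ioi 0)) (htop : ∀ r : ℝ, f =O[atTop] (fun x : ℝ ↦ x ^ r))
    (hfe : ∀ x : ℝ, 0 < x → f (1 / x) = (ε * ((x ^ k : ℝ) : ℂ)) * conj (f x)) :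
    Differentiable ℂ (mellin f) ∧ ∀ s, mellin f (k - conj s) = ε * conj (mellin f s) := by
  let P := conjPair f k ε hk hε hc htop hfe
  have hP : IsStrongFEPair P := ⟨rfl, rfl⟩
  have e1 : P.Λ = mellin f := hP.Λ_eq
  have e2 : P.symm.Λ = mellin (fun x ↦ conj (f x)) := hP.symm.Λ_eq
  refine ⟨e1 ▸ hP.differentiable_Λ, fun s ↦ ?_⟩
  have := P.functional_equation (conj s)
  rw [e1, e2, mellin_conj_aux] at this
  exact this

lemma int_split {lam : ℝ} (h0 : 0 < lam) (h1 : lam < 1) {s : ℂ} (hs : 1 < s.re) (e : ℂ)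
    (A : ℂ) (hA : A ≠ 0) (T : ℂ) (σ : ℤ → ℂ) (hσ1 : ∀ n : ℕ, σ n = 1)
    (hσ2 : ∀ n : ℕ, σ (-(n + 1)) = e)
    (hT : HasSum (fun n : ℤ ↦ A * thA lam n * σ n / (|n + lam| : ℝ) ^ s) T) :
    lerchSeries lam lam s + e * cexp (-2 * π * I * lam) * lerchSeries (1 - lam) (1 - lam) s
      = A⁻¹ * T := by
  have hsum := hT.summable
  have hs1 : Summable fun n : ℕ ↦ A * thA lam n * σ n / (|((n : ℤ) : ℝ) + lam| : ℝ) ^ s :=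
    hsum.comp_injective (i := fun n : ℕ ↦ (n : ℤ)) Nat.cast_injective
  have hs2 : Summable fun n : ℕ ↦ A * thA lam (-(n + 1)) * σ (-(n + 1)) /
      (|((-(n + 1) : ℤ) : ℝ) + lam| : ℝ) ^ s :=
    hsum.comp_injective (i := fun n : ℕ ↦ (-(n + 1) : ℤ)) (fun a b h ↦ by simpa using h)
  have ht := tsum_of_nat_of_neg_add_one
    (f := fun n : ℤ ↦ A * thA lam n * σ n / (|n + lam| : ℝ) ^ s) hs1 hs2
  rw [hT.tsum_eq] at ht
  have e1 : ∀ n : ℕ, A * thA lam n * σ n / (|((n : ℤ) : ℝ) + lam| : ℝ) ^ s =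
      A * (cexp (2 * π * I * lam * n) / ((n : ℂ) + lam) ^ s) := by
    intro n
    rw [hσ1, abs_of_pos (by push_cast; positivity), thA]
    push_cast
    ring
  have e2 : ∀ n : ℕ, A * thA lam (-(n + 1)) * σ (-(n + 1)) /
      (|((-(n + 1) : ℤ) : ℝ) + lam| : ℝ) ^ s =
      A * e * cexp (-2 * π * I * lam) *
        (cexp (2 * π * I * (1 - lam : ℝ) * n) / ((n : ℂ) + (1 - lam : ℝ)) ^ s) := by
    intro n
    have hn : (0 : ℝ) ≤ n := n.cast_nonneg
    have h3 : thA lam (-(n + 1)) = cexp (-2 * π * I * lam) *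
        cexp (2 * π * I * (1 - lam : ℝ) * n) := by
      rw [thA, ← Complex.exp_add, ← mul_one (cexp (2 * π * I * lam * _)),
        ← Complex.exp_nat_mul_two_pi_mul_I n, ← Complex.exp_add]
      congr 1
      push_cast
      ring
    rw [hσ2, h3, abs_of_neg (by push_cast; linarith)]
    rw [show ((-(((-(n + 1) : ℤ) : ℝ) + lam) : ℝ) : ℂ) = (n : ℂ) + (1 - lam : ℝ) by
      push_cast; ring]
    ring
  simp only [e1, e2] at ht
  rw [tsum_mul_left, tsum_mul_left] at ht
  rw [ht, lerchSeries, lerchSeries]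
  field_simp

lemma even_id {lam : ℝ} (h0 : 0 < lam) (h1 : lam < 1) {s : ℂ} (hs : 1 < s.re) :
    lerchSeries lam lam s + 1 * cexp (-2 * π * I * lam) * lerchSeries (1 - lam) (1 - lam) s
      = (Gammaℝ s)⁻¹ * mellin (thE lam) (s / 2) := by
  have hs0 : 0 < s.re := by linarith
  refine int_split h0 h1 hs 1 _ (Gammaℝ_ne_zero_of_re_pos hs0) _ (fun _ ↦ 1) (fun _ ↦ rfl)
    (fun _ ↦ rfl) ?_
  have := hasSum_mellin_pi_mul_sq (a := thA lam) (r := fun n : ℤ ↦ n + lam) (F := thE lam) hs0 ?_ ?_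
  · simpa using this
  · intro t ht
    refine (hasSum_thE lam ht).congr_fun fun n ↦ ?_
    rw [if_neg]
    intro h
    have h2 : (-1 : ℝ) < (n : ℝ) := by linarith
    have h3 : (n : ℝ) < 0 := by linarith
    have h2' : (-1 : ℤ) < n := by exact_mod_cast h2
    have h3' : n < 0 := by exact_mod_cast h3
    omega
  · simp_rw [norm_thA]
    rwa [summable_one_div_int_add_rpow]

lemma odd_id {lam : ℝ} (h0 : 0 < lam) (h1 : lam < 1) {s : ℂ} (hs : 1 < s.re) :
    lerchSeries lam lam s + (-1) * cexp (-2 * π * I * lam) * lerchSeries (1 - lam) (1 - lam) s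
      = (Gammaℝ (s + 1))⁻¹ * mellin (thO lam) ((s + 1) / 2) := by
  have hs0 : 0 < s.re := by linarith
  refine int_split h0 h1 hs (-1) _ (Gammaℝ_ne_zero_of_re_pos (by simp; linarith)) _
    (fun n : ℤ ↦ ((SignType.sign (n + lam : ℝ) : SignType) : ℂ)) (fun n ↦ ?_)
    (fun n ↦ ?_) ?_
  · have : (0 : ℝ) < ((n : ℤ) : ℝ) + lam := by push_cast; positivity
    simp only [sign_pos this]; simp
  · have : (((-(n + 1) : ℤ) : ℝ) + lam) < 0 := by
      push_cast; have : (0 : ℝ) ≤ n := n.cast_nonneg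
      linarith
    simp only [sign_neg this]; simp
  refine hasSum_mellin_pi_mul_sq' (a := thA lam) (r := fun n : ℤ ↦ n + lam) (F := thO lam) hs0 ?_ ?_
  · intro t ht
    exact hasSum_thO lam ht
  · simp_rw [norm_thA]
    rwa [summable_one_div_int_add_rpow]

lemma cont_aux (F G H : ℂ → ℂ) (c : ℂ) (hF : ∀ s : ℂ, s ≠ 1 → DifferentiableAt ℂ F s)
    (hG : ∀ s : ℂ, s ≠ 1 → DifferentiableAt ℂ G s) (hH : Differentiable ℂ H)
    (h : ∀ s : ℂ, 1 < s.re → F s + c * G s = H s) (s : ℂ) (hs : s ≠ 1) :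
    F s + c * G s = H s := by
  have hd1 : DifferentiableOn ℂ (fun s ↦ F s + c * G s) {1}ᶜ := fun z hz ↦
    ((hF z hz).add ((hG z hz).const_mul c)).differentiableWithinAt
  have hA1 := hd1.analyticOnNhd isOpen_compl_singleton
  have hA2 := hH.differentiableOn.analyticOnNhd (s := {(1 : ℂ)}ᶜ) isOpen_compl_singleton
  have hpc : IsPreconnected ({1}ᶜ : Set ℂ) :=
    (isConnected_compl_singleton_of_one_lt_rank (by simp [Complex.rank_real_complex]) 1).isPreconnected
  refine hA1.eqOn_of_preconnected_of_eventuallyEq hA2 hpc (z₀ := 2) (by simp) ?_ hs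
  have : {s : ℂ | 1 < s.re} ∈ 𝓝 (2 : ℂ) :=
    (isOpen_lt continuous_const continuous_re).mem_nhds (by simp)
  filter_upwards [this] with z hz using h z hz

/-- a zero of `L(lam, lam, ·)` on the critical line is a zero of
`L(1-lam, 1-lam, ·)`. -/
theorem lerch_zero_on_critical_line (lam : ℝ) (hlam0 : 0 < lam) (hlam1 : lam < 1)
    (F G : ℂ → ℂ) (hF : IsLerch lam lam F) (hG : IsLerch (1 - lam) (1 - lam) G)
    (ρ : ℂ) (hρ : F ρ = 0) (hρre : ρ.re = 1 / 2) :
    G ρ = 0 := by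
  set ε : ℂ := cexp (-2 * π * I * lam ^ 2) with hεdef
  have hε : ε ≠ 0 := Complex.exp_ne_zero _
  set c : ℂ := cexp (-2 * π * I * lam) with hcdef
  have hc : c ≠ 0 := Complex.exp_ne_zero _
  obtain ⟨dE, fE⟩ := conjPair_props (thE lam) (1 / 2) ε (by norm_num) hε (continuousOn_thE lam)
    (thE_top hlam0 hlam1) (fun x hx ↦ thE_feq lam hx)
  obtain ⟨dO, fO⟩ := conjPair_props (thO lam) (3 / 2) (I * ε) (by norm_num)
    (mul_ne_zero I_ne_zero hε) (continuousOn_thO lam)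
    (thO_top lam) (fun x hx ↦ thO_feq lam hx)
  have hρ1 : ρ ≠ 1 := by
    rintro rfl
    norm_num at hρre
  have hcj : conj ρ = 1 - ρ := by
    apply Complex.ext <;> simp
    rw [hρre]; norm_num
  have hA : Gammaℝ ρ ≠ 0 := Gammaℝ_ne_zero_of_re_pos (by rw [hρre]; norm_num)
  have hB : Gammaℝ (ρ + 1) ≠ 0 := Gammaℝ_ne_zero_of_re_pos (by simp [hρre]; norm_num)
  have hE := cont_aux F G (fun s ↦ (Gammaℝ s)⁻¹ * mellin (thE lam) (s / 2)) (1 * c) hF.1 hG.1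
    (differentiable_Gammaℝ_inv.mul (dE.comp (by fun_prop)))
    (fun s hs ↦ by rw [hF.2 s hs, hG.2 s hs]; exact even_id hlam0 hlam1 hs) ρ hρ1
  have hO := cont_aux F G (fun s ↦ (Gammaℝ (s + 1))⁻¹ * mellin (thO lam) ((s + 1) / 2)) (-1 * c)
    hF.1 hG.1
    ((differentiable_Gammaℝ_inv.comp (f := fun s : ℂ ↦ s + 1) (by fun_prop)).mul
      (dO.comp (by fun_prop)))
    (fun s hs ↦ by rw [hF.2 s hs, hG.2 s hs]; exact odd_id hlam0 hlam1 hs) ρ hρ1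
  have gE := fE (ρ / 2)
  have gO := fO ((ρ + 1) / 2)
  rw [show ((1 / 2 : ℝ) : ℂ) - conj (ρ / 2) = ρ / 2 by
    rw [map_div₀, hcj, map_ofNat]; push_cast; ring] at gE
  rw [show ((3 / 2 : ℝ) : ℂ) - conj ((ρ + 1) / 2) = (ρ + 1) / 2 by
    rw [map_div₀, map_add, hcj, map_ofNat, map_one]; push_cast; ring] at gO
  by_contra hGne
  set w := c * G ρ with hw
  have hwne : w ≠ 0 := mul_ne_zero hc hGne
  have mE : mellin (thE lam) (ρ / 2) = Gammaℝ ρ * w := by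
    rw [hρ, zero_add, one_mul] at hE
    rw [hw, hE]; field_simp
  have mO : mellin (thO lam) ((ρ + 1) / 2) = - Gammaℝ (ρ + 1) * w := by
    rw [hρ, zero_add] at hO
    have : w = - ((Gammaℝ (ρ + 1))⁻¹ * mellin (thO lam) ((ρ + 1) / 2)) := by
      rw [← hO, hw]; ring
    rw [this]; field_simp
  have cA : conj (Gammaℝ ρ) = Gammaℝ (1 - ρ) := by
    rw [← Gammaℝ_conj_aux, hcj]
  have cB : conj (Gammaℝ (ρ + 1)) = Gammaℝ (2 - ρ) := by
    rw [← Gammaℝ_conj_aux, map_add, hcj, map_one]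
    ring_nf
  rw [mE, map_mul, cA] at gE
  rw [mO, map_mul, map_neg, cB] at gO
  have i1 := Gammaℝ_one_sub_mul_Gammaℝ_one_add ρ
  have i2 := Gammaℝ_one_sub_mul_Gammaℝ_one_add (1 - ρ)
  rw [show (1 : ℂ) - (1 - ρ) = ρ by ring, show (1 : ℂ) + (1 - ρ) = 2 - ρ by ring,
    show (π * (1 - ρ) / 2 : ℂ) = π / 2 - π * ρ / 2 by ring, Complex.cos_pi_div_two_sub] at i2
  rw [add_comm 1 ρ] at i1
  have hcw : conj w ≠ 0 := by simpa using hwne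
  have key : I * (Gammaℝ ρ * Gammaℝ (2 - ρ)) = Gammaℝ (1 - ρ) * Gammaℝ (ρ + 1) := by
    have : (I * (Gammaℝ ρ * Gammaℝ (2 - ρ))) * (ε * w * conj w)
        = (Gammaℝ (1 - ρ) * Gammaℝ (ρ + 1)) * (ε * w * conj w) := by
      linear_combination (Gammaℝ (ρ + 1) * w) * gE + (Gammaℝ ρ * w) * gO
    exact mul_right_cancel₀ (mul_ne_zero (mul_ne_zero hε hwne) hcw) this
  have hcos : Complex.cos (π * ρ / 2) ≠ 0 := by
    intro h
    rw [h, inv_zero] at i1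
    exact (mul_ne_zero (Gammaℝ_ne_zero_of_re_pos (by simp [hρre]; norm_num)) hB) i1
  have hsin : Complex.sin (π * ρ / 2) ≠ 0 := by
    intro h
    rw [h, inv_zero] at i2
    exact (mul_ne_zero hA (Gammaℝ_ne_zero_of_re_pos (by simp [hρre]; norm_num))) i2
  rw [i1, i2] at key
  have k2 : I * Complex.cos (π * ρ / 2) = Complex.sin (π * ρ / 2) := by
    field_simp at key
    exact key
  have := Complex.sin_sq_add_cos_sq (π * ρ / 2)
  rw [← k2, mul_pow, I_sq] at this
  simp at this
end

section
/- Let 0 < λ < 1 and let ρ ∈ ℂ with Im ρ > 0 be such that both ρ and 1 − conj(ρ) are zeros of L(λ,λ,·). Then L(1−λ,1−λ,ρ) = 0. -/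
open scoped Classical

namespace LerchAux

open Complex Filter Topology Asymptotics Set MeasureTheory HurwitzZeta

/-- Even theta kernel with characteristics. -/
noncomputable def evK (a b : ℝ) (t : ℝ) : ℂ :=
  cexp (-Real.pi * b ^ 2 * t) * jacobiTheta₂ (a + b * I * t) (I * t)

/-- Odd theta kernel with characteristics. -/
noncomputable def odK (a b : ℝ) (t : ℝ) : ℂ :=
  cexp (-Real.pi * b ^ 2 * t) * (jacobiTheta₂' (a + b * I * t) (I * t) / (2 * Real.pi * I)
    + b * jacobiTheta₂ (a + b * I * t) (I * t))

lemma hasSum_evK (a b : ℝ) {t : ℝ} (ht : 0 < t) :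
    HasSum (fun n : ℤ ↦ cexp (2 * Real.pi * I * a * n) * Real.exp (-Real.pi * (n + b) ^ 2 * t))
      (evK a b t) := by
  refine ((hasSum_jacobiTheta₂_term (a + b * I * t) (τ := I * t) (by simpa)).mul_left
    (cexp (-Real.pi * b ^ 2 * t))).congr_fun fun n ↦ ?_
  rw [jacobiTheta₂_term, ← Complex.exp_add]
  push_cast
  rw [← Complex.exp_add]
  congr 1
  linear_combination - (2 * Real.pi * n * b * t + Real.pi * n ^ 2 * t : ℂ) * I_sq

lemma hasSum_odK (a b : ℝ) {t : ℝ} (ht : 0 < t) :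
    HasSum (fun n : ℤ ↦ cexp (2 * Real.pi * I * a * n) * ((n + b : ℝ) : ℂ) *
      Real.exp (-Real.pi * (n + b) ^ 2 * t)) (odK a b t) := by
  have h1 := hasSum_jacobiTheta₂_term (a + b * I * t) (τ := I * t) (by simpa)
  have h2 := hasSum_jacobiTheta₂'_term (a + b * I * t) (τ := I * t) (by simpa)
  refine (((h2.div_const (2 * Real.pi * I)).add (h1.mul_left ↑b)).mul_left
    (cexp (-Real.pi * b ^ 2 * t))).congr_fun (fun n ↦ ?_)
  rw [jacobiTheta₂'_term, mul_assoc (2 * Real.pi * I) (n : ℂ) (jacobiTheta₂_term _ _ _),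
    mul_div_cancel_left₀ _ two_pi_I_ne_zero,
    ← add_mul, mul_left_comm, jacobiTheta₂_term, ← Complex.exp_add]
  push_cast
  rw [mul_right_comm, ← Complex.exp_add, mul_comm]
  congr 2
  linear_combination - (2 * Real.pi * n * b * t + Real.pi * n ^ 2 * t : ℂ) * I_sq

lemma continuousOn_evK (a b : ℝ) : ContinuousOn (evK a b) (Ioi 0) := by
  refine continuousOn_of_forall_continuousAt (fun x hx ↦ .mul (by fun_prop) ?_)
  exact (continuousAt_jacobiTheta₂ (a + b * I * x) <| by simpa).comp
    (f := fun u : ℝ ↦ (a + b * I * u, I * u)) (by fun_prop)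

lemma continuousOn_odK (a b : ℝ) : ContinuousOn (odK a b) (Ioi 0) := by
  refine continuousOn_of_forall_continuousAt (fun x hx ↦ .mul (by fun_prop) (.add ?_ ?_))
  · exact ((continuousAt_jacobiTheta₂' (a + b * I * x) <| by simpa).comp
      (f := fun u : ℝ ↦ (a + b * I * u, I * u)) (by fun_prop)).div_const _
  · exact continuousAt_const.mul ((continuousAt_jacobiTheta₂ (a + b * I * x) <| by simpa).comp
      (f := fun u : ℝ ↦ (a + b * I * u, I * u)) (by fun_prop))

lemma norm_exp_aux (a : ℝ) (n : ℤ) : ‖cexp (2 * Real.pi * I * a * n)‖ = 1 := by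
  rw [Complex.norm_exp]
  simp

lemma norm_evK_le (a b : ℝ) {t : ℝ} (ht : 0 < t) : ‖evK a b t‖ ≤ evenKernel b t := by
  rw [← (hasSum_evK a b ht).tsum_eq]
  refine tsum_of_norm_bounded (hasSum_int_evenKernel b ht) fun n ↦ ?_
  rw [norm_mul, norm_exp_aux, one_mul, norm_real, Real.norm_of_nonneg (Real.exp_pos _).le]

lemma abs_le_exp_aux (x : ℝ) : |x| ≤ Real.exp (Real.pi * x ^ 2) := by
  have h1 := Real.add_one_le_exp (Real.pi * x ^ 2)
  have h2 := Real.pi_gt_three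
  have : |x| ≤ 3 * x ^ 2 + 1 := by
    rw [← sq_abs]; nlinarith [sq_nonneg (|x| - 1), sq_nonneg (|x|)]
  nlinarith [sq_nonneg x]

lemma norm_odK_le (a b : ℝ) {t : ℝ} (ht : 1 < t) : ‖odK a b t‖ ≤ evenKernel b (t - 1) := by
  rw [← (hasSum_odK a b (by linarith)).tsum_eq]
  refine tsum_of_norm_bounded (hasSum_int_evenKernel b (sub_pos.mpr ht)) fun n ↦ ?_
  rw [norm_mul, norm_mul, norm_exp_aux, one_mul, norm_real, norm_real,
    Real.norm_of_nonneg (Real.exp_pos _).le, Real.norm_eq_abs]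
  refine (mul_le_mul_of_nonneg_right (abs_le_exp_aux _) (Real.exp_pos _).le).trans ?_
  rw [← Real.exp_add]
  apply le_of_eq
  congr 1
  ring

lemma coe_ne_zero {b : ℝ} (h0 : 0 < b) (h1 : b < 1) : (b : UnitAddCircle) ≠ 0 := by
  rw [Ne, AddCircle.coe_eq_zero_iff]
  rintro ⟨n, hn⟩
  simp only [zsmul_one] at hn
  rw [← hn] at h0 h1
  have h2 : (0 : ℤ) < n := by exact_mod_cast h0
  have h3 : n < (1 : ℤ) := by exact_mod_cast h1
  omega

lemma evenKernel_top {b : ℝ} (h0 : 0 < b) (h1 : b < 1) :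
    ∃ p : ℝ, 0 < p ∧ (evenKernel b) =O[atTop] (fun t ↦ Real.exp (-p * t)) := by
  simpa [coe_ne_zero h0 h1] using isBigO_atTop_evenKernel_sub (b : UnitAddCircle)

lemma evK_top (a : ℝ) {b : ℝ} (h0 : 0 < b) (h1 : b < 1) (r : ℝ) :
    evK a b =O[atTop] (· ^ r) := by
  obtain ⟨p, hp, h⟩ := evenKernel_top h0 h1
  refine IsBigO.trans (IsBigO.of_bound 1 ?_) (h.trans (isLittleO_exp_neg_mul_rpow_atTop hp r).isBigO)
  filter_upwards [eventually_gt_atTop 0] with t ht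
  rw [one_mul]
  exact (norm_evK_le a b ht).trans (le_abs_self _)

lemma odK_top (a : ℝ) {b : ℝ} (h0 : 0 < b) (h1 : b < 1) (r : ℝ) :
    odK a b =O[atTop] (· ^ r) := by
  obtain ⟨p, hp, h⟩ := evenKernel_top h0 h1
  have h' := h.comp_tendsto (tendsto_atTop_add_const_right atTop (-1 : ℝ) tendsto_id)
  have h'' : (fun t : ℝ ↦ Real.exp (-p * (t + -1))) =O[atTop] (fun t ↦ Real.exp (-p * t)) := by
    refine IsBigO.of_bound (Real.exp p) (Eventually.of_forall fun t ↦ le_of_eq ?_)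
    rw [Real.norm_of_nonneg (Real.exp_pos _).le, Real.norm_of_nonneg (Real.exp_pos _).le,
      ← Real.exp_add]
    congr 1; ring
  refine IsBigO.trans (IsBigO.of_bound 1 ?_)
    ((h'.trans h'').trans (isLittleO_exp_neg_mul_rpow_atTop hp r).isBigO)
  filter_upwards [eventually_gt_atTop 1] with t ht
  rw [one_mul]
  exact (norm_odK_le a b ht).trans (le_abs_self _)

lemma evK_feq (a b : ℝ) {x : ℝ} (hx : 0 < x) :
    evK a b (1 / x) = (cexp (-2 * Real.pi * I * a * b) * ((x ^ (1 / 2 : ℝ) : ℝ) : ℂ)) *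
      evK (-b) a x := by
  have hx' : (x : ℂ) ≠ 0 := ofReal_ne_zero.mpr hx.ne'
  have h4 : arg x ≠ Real.pi := by rw [arg_ofReal_of_nonneg hx.le]; exact Real.pi_ne_zero.symm
  rw [evK, evK, jacobiTheta₂_functional_equation, ← jacobiTheta₂_neg_left (_ / _)]
  have e1 : -((a + b * I * ((1 / x : ℝ) : ℂ)) / (I * ((1 / x : ℝ) : ℂ)))
      = ((-b : ℝ) : ℂ) + a * I * x := by
    push_cast
    field_simp
    linear_combination (-(a : ℂ) * x) * I_sq
  have e2 : -1 / (I * ((1 / x : ℝ) : ℂ)) = I * x := by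
    push_cast
    field_simp
    linear_combination - I_sq
  have e3 : -I * (I * ((1 / x : ℝ) : ℂ)) = (x : ℂ)⁻¹ := by
    push_cast
    field_simp
    linear_combination - I_sq
  rw [e1, e2, e3, inv_cpow _ _ h4, one_div (_ ^ _)⁻¹, inv_inv, ofReal_cpow hx.le]
  have e4 : cexp (-Real.pi * b ^ 2 * ((1 / x : ℝ) : ℂ)) *
      cexp (-Real.pi * I * (a + b * I * ((1 / x : ℝ) : ℂ)) ^ 2 / (I * ((1 / x : ℝ) : ℂ))) =
      cexp (-2 * Real.pi * I * a * b) * cexp (-Real.pi * a ^ 2 * x) := by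
    rw [← Complex.exp_add, ← Complex.exp_add]
    congr 1
    push_cast
    field_simp
    linear_combination (-(b : ℂ) ^ 2) * I_sq
  push_cast at e4 ⊢
  linear_combination ((x : ℂ) ^ (1 / 2 : ℂ) * jacobiTheta₂ (-b + a * I * x) (I * x)) * e4

lemma odK_feq (a b : ℝ) {x : ℝ} (hx : 0 < x) :
    odK a b (1 / x) = (I * cexp (-2 * Real.pi * I * a * b) * ((x ^ (3 / 2 : ℝ) : ℝ) : ℂ)) *
      odK (-b) a x := by
  have hx' : (x : ℂ) ≠ 0 := ofReal_ne_zero.mpr hx.ne'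
  have h4 : arg x ≠ Real.pi := by rw [arg_ofReal_of_nonneg hx.le]; exact Real.pi_ne_zero.symm
  have e1 : ((a + b * I * ((1 / x : ℝ) : ℂ)) / (I * ((1 / x : ℝ) : ℂ)))
      = -(((-b : ℝ) : ℂ) + a * I * x) := by
    push_cast
    field_simp
    linear_combination ((a : ℂ) * x) * I_sq
  have e2 : -1 / (I * ((1 / x : ℝ) : ℂ)) = I * x := by
    push_cast
    field_simp
    linear_combination - I_sq
  have e3 : -I * (I * ((1 / x : ℝ) : ℂ)) = (x : ℂ)⁻¹ := by
    push_cast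
    field_simp
    linear_combination - I_sq
  have e4 : cexp (-Real.pi * b ^ 2 * ((1 / x : ℝ) : ℂ)) *
      cexp (-Real.pi * I * (a + b * I * ((1 / x : ℝ) : ℂ)) ^ 2 / (I * ((1 / x : ℝ) : ℂ))) =
      cexp (-2 * Real.pi * I * a * b) * cexp (-Real.pi * a ^ 2 * x) := by
    rw [← Complex.exp_add, ← Complex.exp_add]
    congr 1
    push_cast
    field_simp
    linear_combination (-(b : ℂ) ^ 2) * I_sq
  have e5 : ((x ^ (3 / 2 : ℝ) : ℝ) : ℂ) = (x : ℂ) ^ (1 / 2 : ℂ) * x := by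
    rw [show (3 / 2 : ℝ) = 1 / 2 + 1 by norm_num, Real.rpow_add hx, Real.rpow_one, ofReal_mul,
      ofReal_cpow hx.le]
    push_cast; rfl
  rw [odK, odK, jacobiTheta₂'_functional_equation,
    jacobiTheta₂_functional_equation (a + b * I * ((1 / x : ℝ) : ℂ)), e1, e2, e3, jacobiTheta₂_neg_left, jacobiTheta₂'_neg_left, inv_cpow _ _ h4, one_div (_ ^ _)⁻¹, inv_inv,
    e5]
  generalize jacobiTheta₂ _ _ = T
  generalize jacobiTheta₂' _ _ = T'
  generalize (x : ℂ) ^ (1 / 2 : ℂ) = y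
  generalize cexp (-Real.pi * I * (a + b * I * ((1 / x : ℝ) : ℂ)) ^ 2 / (I * ((1 / x : ℝ) : ℂ))) = E1 at *
  generalize cexp (-Real.pi * b ^ 2 * ((1 / x : ℝ) : ℂ)) = E2 at *
  have hpi : (Real.pi : ℂ) ≠ 0 := ofReal_ne_zero.mpr Real.pi_ne_zero
  have e6 : y * E1 / (I * ((1 / x : ℝ) : ℂ)) *
      (-T' - 2 * Real.pi * I * (a + b * I * ((1 / x : ℝ) : ℂ)) * T) / (2 * Real.pi * I)
       + b * (y * E1 * T) = E1 * (I * y * x * (T' / (2 * Real.pi * I) + a * T)) := by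
    push_cast
    field_simp
    ring_nf
    simp only [I_sq, show I ^ 3 = -I by rw [pow_succ, I_sq]; ring]
    ring
  rw [e6]
  linear_combination (I * y * x * (T' / (2 * Real.pi * I) + a * T)) * e4

/-- Strong FE pair, even. -/
noncomputable def evPair (a b : ℝ) (ha0 : 0 < a) (ha1 : a < 1) (hb0 : 0 < b) (hb1 : b < 1) :
    WeakFEPair ℂ where
  f := evK a b
  g := evK (-b) a
  hf_int := (continuousOn_evK a b).locallyIntegrableOn measurableSet_Ioi
  hg_int := (continuousOn_evK _ _).locallyIntegrableOn measurableSet_Ioi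
  k := 1 / 2
  hk := one_half_pos
  ε := cexp (-2 * Real.pi * I * a * b)
  hε := Complex.exp_ne_zero _
  f₀ := 0
  g₀ := 0
  hf_top r := by simpa using evK_top a hb0 hb1 r
  hg_top r := by simpa using evK_top (-b) ha0 ha1 r
  h_feq x hx := evK_feq a b hx

/-- Strong FE pair, odd. -/
noncomputable def odPair (a b : ℝ) (ha0 : 0 < a) (ha1 : a < 1) (hb0 : 0 < b) (hb1 : b < 1) :
    WeakFEPair ℂ where
  f := odK a b
  g := odK (-b) a
  hf_int := (continuousOn_odK a b).locallyIntegrableOn measurableSet_Ioi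
  hg_int := (continuousOn_odK _ _).locallyIntegrableOn measurableSet_Ioi
  k := 3 / 2
  hk := by norm_num
  ε := I * cexp (-2 * Real.pi * I * a * b)
  hε := mul_ne_zero I_ne_zero (Complex.exp_ne_zero _)
  f₀ := 0
  g₀ := 0
  hf_top r := by simpa using odK_top a hb0 hb1 r
  hg_top r := by simpa using odK_top (-b) ha0 ha1 r
  h_feq x hx := odK_feq a b hx

lemma strong_ev (a b : ℝ) (ha0 : 0 < a) (ha1 : a < 1) (hb0 : 0 < b) (hb1 : b < 1) :
    IsStrongFEPair (evPair a b ha0 ha1 hb0 hb1) := ⟨rfl, rfl⟩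

lemma strong_od (a b : ℝ) (ha0 : 0 < a) (ha1 : a < 1) (hb0 : 0 < b) (hb1 : b < 1) :
    IsStrongFEPair (odPair a b ha0 ha1 hb0 hb1) := ⟨rfl, rfl⟩

lemma mellin_ev (a b : ℝ) (ha0 : 0 < a) (ha1 : a < 1) (hb0 : 0 < b) (hb1 : b < 1) (s : ℂ) :
    mellin (evK a b) (s / 2) =
      cexp (-2 * Real.pi * I * a * b) * mellin (evK (-b) a) ((1 - s) / 2) := by
  have h := strong_ev a b ha0 ha1 hb0 hb1
  have h2 := (evPair a b ha0 ha1 hb0 hb1).functional_equation ((1 - s) / 2)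
  rw [h.Λ_eq, h.symm.Λ_eq] at h2
  convert! h2 using 2
  simp only [evPair]; push_cast; ring

lemma mellin_od (a b : ℝ) (ha0 : 0 < a) (ha1 : a < 1) (hb0 : 0 < b) (hb1 : b < 1) (s : ℂ) :
    mellin (odK a b) ((s + 1) / 2) =
      I * cexp (-2 * Real.pi * I * a * b) * mellin (odK (-b) a) ((1 - s + 1) / 2) := by
  have h := strong_od a b ha0 ha1 hb0 hb1
  have h2 := (odPair a b ha0 ha1 hb0 hb1).functional_equation ((1 - s + 1) / 2)
  rw [h.Λ_eq, h.symm.Λ_eq] at h2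
  convert! h2 using 2
  simp only [odPair]; push_cast; ring

/-- differentiability of the mellin transforms -/
def Nice (f : ℝ → ℂ) : Prop := Differentiable ℂ (mellin f)

lemma nice_ev (a b : ℝ) (ha0 : 0 < a) (ha1 : a < 1) (hb0 : 0 < b) (hb1 : b < 1) :
    Nice (evK a b) ∧ Nice (evK (-b) a) := by
  have h := strong_ev a b ha0 ha1 hb0 hb1
  have h1 := h.differentiable_Λ
  have h2 := h.symm.differentiable_Λ
  rw [h.Λ_eq] at h1
  rw [h.symm.Λ_eq] at h2
  exact ⟨h1, h2⟩

lemma nice_od (a b : ℝ) (ha0 : 0 < a) (ha1 : a < 1) (hb0 : 0 < b) (hb1 : b < 1) :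
    Nice (odK a b) ∧ Nice (odK (-b) a) := by
  have h := strong_od a b ha0 ha1 hb0 hb1
  have h1 := h.differentiable_Λ
  have h2 := h.symm.differentiable_Λ
  rw [h.Λ_eq] at h1
  rw [h.symm.Λ_eq] at h2
  exact ⟨h1, h2⟩

lemma summable_aux (a b : ℝ) {s : ℂ} (hs : 1 < s.re) :
    Summable fun n : ℤ ↦ ‖cexp (2 * Real.pi * I * a * n)‖ / |(n : ℝ) + b| ^ s.re := by
  simp_rw [norm_exp_aux]
  rwa [Real.summable_one_div_int_add_rpow]

lemma dirichlet_term_neg (a b : ℝ) (s : ℂ) (hb1 : b < 1) (m : ℕ) :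
    cexp (2 * Real.pi * I * a * ((-(m + 1 : ℤ) : ℤ) : ℂ)) /
      ((|((-(m + 1 : ℤ) : ℤ) : ℝ) + b| : ℝ) : ℂ) ^ s
    = cexp (-2 * Real.pi * I * a) *
      (cexp (2 * Real.pi * I * (-a : ℝ) * m) / ((m : ℂ) + (1 - b : ℝ)) ^ s) := by
  have hm : (0 : ℝ) ≤ m := Nat.cast_nonneg m
  rw [abs_of_nonpos (by push_cast; linarith), ← mul_div_assoc, ← Complex.exp_add]
  congr 2
  · push_cast; ring
  · push_cast; ring

lemma sgn_neg_aux (b : ℝ) (hb1 : b < 1) (m : ℕ) :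
    SignType.sign (((-(m + 1 : ℤ) : ℤ) : ℝ) + b) = -1 := by
  have hm : (0 : ℝ) ≤ m := Nat.cast_nonneg m
  rw [sign_eq_neg_one_iff]
  push_cast; linarith

lemma tsum_split {f : ℤ → ℂ} (hf : Summable f) :
    ∑' n : ℤ, f n = ∑' m : ℕ, f m + ∑' m : ℕ, f (-(m + 1 : ℤ)) := by
  have hi : Function.Injective (fun m : ℕ ↦ (-(m + 1 : ℤ) : ℤ)) := fun x y h ↦ by
    simp only at h
    omega
  exact tsum_of_nat_of_neg_add_one (hf.comp_injective Nat.cast_injective) (hf.comp_injective hi)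

lemma mellin_evK_eq (a b : ℝ) (hb0 : 0 < b) (hb1 : b < 1) {s : ℂ} (hs : 1 < s.re) :
    mellin (evK a b) (s / 2) = Gammaℝ s * (lerchSeries a b s +
      cexp (-2 * Real.pi * I * a) * lerchSeries (-a) (1 - b) s) := by
  have hF (t : ℝ) (ht : t ∈ Ioi 0) : HasSum (fun n : ℤ ↦ if (n : ℝ) + b = 0 then 0
      else cexp (2 * Real.pi * I * a * n) * Real.exp (-Real.pi * (n + b) ^ 2 * t)) (evK a b t) := by
    refine (hasSum_evK a b ht).congr_fun fun n ↦ ?_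
    rw [if_neg]
    intro h
    apply coe_ne_zero hb0 hb1
    rw [AddCircle.coe_eq_zero_iff]
    exact ⟨-n, by simp; linarith⟩
  have h := hasSum_mellin_pi_mul_sq (zero_lt_one.trans hs) hF (summable_aux a b hs)
  simp_rw [mul_div_assoc] at h
  rw [← h.tsum_eq, tsum_mul_left]
  congr 1
  have hsum : Summable fun n : ℤ ↦ cexp (2 * Real.pi * I * a * n) / ((|(n : ℝ) + b| : ℝ) : ℂ) ^ s := by
    refine Summable.of_norm ((summable_aux a b hs).congr fun n ↦ ?_)
    rw [norm_div, norm_cpow_eq_rpow_re_of_nonneg (abs_nonneg _) (by intro h; simp [h] at hs; linarith)]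
  rw [tsum_split hsum]
  congr 1
  · refine tsum_congr fun m ↦ ?_
    rw [abs_of_pos (by simp; positivity)]
    push_cast; rfl
  · rw [lerchSeries, ← tsum_mul_left]
    exact tsum_congr fun m ↦ dirichlet_term_neg a b s hb1 m

lemma mellin_odK_eq (a b : ℝ) (hb0 : 0 < b) (hb1 : b < 1) {s : ℂ} (hs : 1 < s.re) :
    mellin (odK a b) ((s + 1) / 2) = Gammaℝ (s + 1) * (lerchSeries a b s -
      cexp (-2 * Real.pi * I * a) * lerchSeries (-a) (1 - b) s) := by
  have h := hasSum_mellin_pi_mul_sq' (zero_lt_one.trans hs)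
    (fun t ht ↦ hasSum_odK a b ht) (summable_aux a b hs)
  simp_rw [mul_assoc (Gammaℝ _), mul_div_assoc (Gammaℝ _)] at h
  rw [← h.tsum_eq, tsum_mul_left]
  congr 1
  have hsum : Summable fun n : ℤ ↦ cexp (2 * Real.pi * I * a * n) *
      (SignType.sign ((n : ℝ) + b) : ℂ) / ((|(n : ℝ) + b| : ℝ) : ℂ) ^ s := by
    refine Summable.of_norm_bounded (summable_aux a b hs) fun n ↦ ?_
    rw [norm_div, norm_cpow_eq_rpow_re_of_nonneg (abs_nonneg _) (by intro h; simp [h] at hs; linarith),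
      norm_mul]
    gcongr
    apply mul_le_of_le_one_right (norm_nonneg _)
    rcases SignType.trichotomy (SignType.sign ((n : ℝ) + b)) with h | h | h <;> simp [h]
  rw [tsum_split hsum, sub_eq_add_neg]
  congr 1
  · refine tsum_congr fun m ↦ ?_
    have : (0 : ℝ) < ((m : ℤ) : ℝ) + b := by simp; positivity
    rw [abs_of_pos this, sign_pos this]
    push_cast; simp
  · rw [lerchSeries, ← tsum_mul_left, ← tsum_neg]
    refine tsum_congr fun m ↦ ?_
    rw [← dirichlet_term_neg a b s hb1 m, sgn_neg_aux b hb1 m]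
    simp [neg_div]

/-- identity theorem on a half plane -/
lemma ident {u v : ℂ → ℂ} (hu : Differentiable ℂ u) (hv : ∀ s, s ≠ 1 → DifferentiableAt ℂ v s)
    (huv : ∀ s : ℂ, 1 < s.re → u s = v s) {s : ℂ} (hs : s.im ≠ 0) : u s = v s := by
  obtain ⟨σ, hσ⟩ : ∃ σ : ℝ, 0 < σ * s.im := ⟨s.im, mul_self_pos.mpr hs⟩
  have hσ0 : σ ≠ 0 := by rintro rfl; simp at hσ
  let U : Set ℂ := {z | 0 < σ * z.im}
  have hUo : IsOpen U := isOpen_lt continuous_const (continuous_const.mul continuous_im)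
  have hUc : Convex ℝ U := by
    have : U = (fun z : ℂ ↦ σ * z.im) ⁻¹' Ioi 0 := rfl
    rw [this]
    exact (convex_Ioi 0).is_linear_preimage ⟨fun x y ↦ by simp; ring, fun c x ↦ by simp; ring⟩
  have hU1 : ∀ z ∈ U, z ≠ 1 := by
    rintro z hz rfl
    simp [U] at hz
  have h1 : AnalyticOnNhd ℂ u U := hu.differentiableOn.analyticOnNhd hUo
  have h2 : AnalyticOnNhd ℂ v U :=
    DifferentiableOn.analyticOnNhd (fun z hz ↦ (hv z (hU1 z hz)).differentiableWithinAt) hUo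
  have hz0 : (2 + σ * I : ℂ) ∈ U := by
    have : 0 < σ * σ := mul_self_pos.mpr hσ0
    simpa [U] using this
  refine h1.eqOn_of_preconnected_of_eventuallyEq h2 hUc.isPreconnected hz0 ?_ hσ
  have : {z : ℂ | 1 < z.re} ∈ 𝓝 (2 + σ * I : ℂ) :=
    (isOpen_lt continuous_const continuous_re).mem_nhds (by simp)
  filter_upwards [this] with z hz using huv z hz

lemma gammaR_ne {s : ℂ} (hs : s.im ≠ 0) : Gammaℝ s ≠ 0 := by
  rw [Ne, Gammaℝ_eq_zero_iff]
  rintro ⟨n, rfl⟩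
  simp at hs

lemma gammaR_ne' {s : ℂ} (hs : 0 < s.re) : Gammaℝ s ≠ 0 := Gammaℝ_ne_zero_of_re_pos hs

lemma even_eq (a b : ℝ) (hb0 : 0 < b) (hb1 : b < 1) (hn : Nice (evK a b)) {H K : ℂ → ℂ}
    (hH : IsLerch a b H) (hK : IsLerch (-a) (1 - b) K) {s : ℂ} (hs : s.im ≠ 0) :
    mellin (evK a b) (s / 2) = Gammaℝ s * (H s + cexp (-2 * Real.pi * I * a) * K s) := by
  have := ident (u := fun s ↦ (Gammaℝ s)⁻¹ * mellin (evK a b) (s / 2))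
    (v := fun s ↦ H s + cexp (-2 * Real.pi * I * a) * K s)
    (differentiable_Gammaℝ_inv.mul (hn.comp (differentiable_id.div_const 2)))
    (fun s hs ↦ (hH.1 s hs).add ((hK.1 s hs).const_mul _)) (fun s hs ↦ ?_) hs
  · rw [← this, mul_inv_cancel_left₀ (gammaR_ne hs)]
  · rw [mellin_evK_eq a b hb0 hb1 hs, inv_mul_cancel_left₀ (gammaR_ne' (by linarith)),
      hH.2 s hs, hK.2 s hs]

lemma odd_eq (a b : ℝ) (hb0 : 0 < b) (hb1 : b < 1) (hn : Nice (odK a b)) {H K : ℂ → ℂ}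
    (hH : IsLerch a b H) (hK : IsLerch (-a) (1 - b) K) {s : ℂ} (hs : s.im ≠ 0) :
    mellin (odK a b) ((s + 1) / 2) =
      Gammaℝ (s + 1) * (H s - cexp (-2 * Real.pi * I * a) * K s) := by
  have := ident (u := fun s ↦ (Gammaℝ (s + 1))⁻¹ * mellin (odK a b) ((s + 1) / 2))
    (v := fun s ↦ H s - cexp (-2 * Real.pi * I * a) * K s)
    ((differentiable_Gammaℝ_inv.comp (differentiable_id.add_const 1)).mul
      (hn.comp ((differentiable_id.add_const 1).div_const 2)))
    (fun s hs ↦ (hH.1 s hs).sub ((hK.1 s hs).const_mul _)) (fun s hs ↦ ?_) hs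
  · rw [← this, mul_inv_cancel_left₀ (gammaR_ne (by simpa))]
  · rw [mellin_odK_eq a b hb0 hb1 hs, inv_mul_cancel_left₀ (gammaR_ne' (by simp; linarith)),
      hH.2 s hs, hK.2 s hs]

lemma lerchSeries_one_sub (a b : ℝ) : lerchSeries (1 - a) b = lerchSeries (-a) b := by
  ext s
  refine tsum_congr fun m ↦ ?_
  congr 1
  rw [show (2 * Real.pi * I * ((1 - a : ℝ) : ℂ) * m : ℂ) =
    2 * Real.pi * I * ((-a : ℝ) : ℂ) * m + m * (2 * Real.pi * I) by push_cast; ring,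
    Complex.exp_add, Complex.exp_nat_mul_two_pi_mul_I, mul_one]

lemma isLerch_one_sub {a b : ℝ} {H : ℂ → ℂ} (h : IsLerch (1 - a) b H) : IsLerch (-a) b H :=
  ⟨h.1, fun s hs ↦ by rw [h.2 s hs, lerchSeries_one_sub]⟩

lemma isLerch_conj {a b : ℝ} (hb : 0 < b) {H : ℂ → ℂ} (h : IsLerch a b H) :
    IsLerch (-a) b (fun s ↦ (starRingEnd ℂ) (H ((starRingEnd ℂ) s))) := by
  refine ⟨fun s hs ↦ ?_, fun s hs ↦ ?_⟩
  · have h1 : (starRingEnd ℂ) s ≠ 1 := by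
      intro h'
      apply hs
      rw [← Complex.conj_conj s, h', map_one]
    have := (h.1 _ h1).conj_conj
    rwa [Complex.conj_conj] at this
  · simp only
    rw [h.2 _ (by simpa), lerchSeries, lerchSeries, conj_tsum]
    refine tsum_congr fun m ↦ ?_
    rw [map_div₀, ← Complex.exp_conj]
    congr 1
    · congr 1
      simp [Complex.conj_ofNat]
    · have h2 : (m : ℂ) + b = ((m + b : ℝ) : ℂ) := by push_cast; rfl
      rw [h2, cpow_conj _ _ (by
        rw [arg_ofReal_of_nonneg (by positivity)]; exact Real.pi_ne_zero.symm)]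
      simp

end LerchAux

/-- a pair of zeros of `L(lam, lam, ·)` symmetric about the critical line
gives a zero of `L(1-lam, 1-lam, ·)`. -/
theorem lerch_symmetric_pair_zero (lam : ℝ) (hlam0 : 0 < lam) (hlam1 : lam < 1)
    (F G : ℂ → ℂ) (hF : IsLerch lam lam F) (hG : IsLerch (1 - lam) (1 - lam) G)
    (ρ : ℂ) (hρim : 0 < ρ.im) (hρ : F ρ = 0) (hρ' : F (1 - (starRingEnd ℂ) ρ) = 0) :
    G ρ = 0 := by
  have hG' := LerchAux.isLerch_one_sub hG
  have hFc := LerchAux.isLerch_conj hlam0 hF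
  have hGc := LerchAux.isLerch_conj (sub_pos.mpr hlam1) hG'
  obtain ⟨n1, n2⟩ := LerchAux.nice_ev lam lam hlam0 hlam1 hlam0 hlam1
  obtain ⟨n3, n4⟩ := LerchAux.nice_od lam lam hlam0 hlam1 hlam0 hlam1
  have him : ρ.im ≠ 0 := hρim.ne'
  have him' : (1 - ρ).im ≠ 0 := by simpa using him
  have m1 := LerchAux.mellin_ev lam lam hlam0 hlam1 hlam0 hlam1 ρ
  have m2 := LerchAux.mellin_od lam lam hlam0 hlam1 hlam0 hlam1 ρ
  rw [LerchAux.even_eq lam lam hlam0 hlam1 n1 hF hG' him,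
    LerchAux.even_eq (-lam) lam hlam0 hlam1 n2 hFc hGc him'] at m1
  rw [LerchAux.odd_eq lam lam hlam0 hlam1 n3 hF hG' him,
    LerchAux.odd_eq (-lam) lam hlam0 hlam1 n4 hFc hGc him'] at m2
  simp only [map_sub, map_one, hρ, hρ', map_zero, zero_add, zero_sub] at m1 m2
  by_contra hB0
  have hB : Complex.exp (-2 * Real.pi * Complex.I * lam) * G ρ ≠ 0 :=
    mul_ne_zero (Complex.exp_ne_zero _) hB0
  generalize Complex.exp (-2 * Real.pi * Complex.I * lam) * G ρ = B at *
  generalize Complex.exp (-2 * Real.pi * Complex.I * ((-lam : ℝ) : ℂ)) * _ = B' at *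
  have he := Complex.exp_ne_zero (-2 * Real.pi * Complex.I * lam * lam)
  generalize Complex.exp (-2 * Real.pi * Complex.I * lam * lam) = e at *
  have hg1 := LerchAux.gammaR_ne him
  have hB' : B' ≠ 0 := by
    rintro rfl
    simp [hg1, hB] at m1
  have key : Complex.I * (Complex.Gammaℝ ρ * Complex.Gammaℝ (1 - ρ + 1)) =
      Complex.Gammaℝ (1 - ρ) * Complex.Gammaℝ (ρ + 1) := by
    have : e * B * B' * (Complex.I * (Complex.Gammaℝ ρ * Complex.Gammaℝ (1 - ρ + 1))) =
      e * B * B' * (Complex.Gammaℝ (1 - ρ) * Complex.Gammaℝ (ρ + 1)) := by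
      linear_combination (Complex.I * e * B' * Complex.Gammaℝ (1 - ρ + 1)) * m1
        + (e * B' * Complex.Gammaℝ (1 - ρ)) * m2
    exact mul_left_cancel₀ (mul_ne_zero (mul_ne_zero he hB) hB') this
  have r1 := Complex.Gammaℝ_one_sub_mul_Gammaℝ_one_add ρ
  have r2 := Complex.Gammaℝ_one_sub_mul_Gammaℝ_one_add (1 - ρ)
  rw [sub_sub_cancel, show Real.pi * (1 - ρ) / 2 = Real.pi / 2 - Real.pi * ρ / 2 by ring,
    Complex.cos_pi_div_two_sub, add_comm] at r2
  rw [add_comm] at r1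
  rw [r1, r2] at key
  have hc : (Complex.cos (Real.pi * ρ / 2))⁻¹ ≠ 0 := by
    rw [← r1]
    exact mul_ne_zero (LerchAux.gammaR_ne him') (LerchAux.gammaR_ne (by simpa))
  have hs : (Complex.sin (Real.pi * ρ / 2))⁻¹ ≠ 0 := by
    rw [← r2]
    exact mul_ne_zero (LerchAux.gammaR_ne him) (LerchAux.gammaR_ne (by simpa))
  have h1 := Complex.sin_sq_add_cos_sq (Real.pi * ρ / 2)
  have hc := inv_ne_zero hc
  have hs := inv_ne_zero hs
  rw [inv_inv] at hc hs
  field_simp at key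
  have h2 : Complex.sin (Real.pi * ρ / 2) ^ 2 = - Complex.cos (Real.pi * ρ / 2) ^ 2 := by
    rw [← key, mul_pow, Complex.I_sq]; ring
  rw [h2] at h1
  simp at h1
end
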